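/- Let (Q', 𝒜) be a measurable space with a probability measure μ, let 𝒫 be a ground set, and let f : 𝒫 × Q' → [0,∞) satisfy 0 ≤ f(p,q) ≤ M for every p ∈ 𝒫 and q ∈ Q' (with each map q ↦ f(p,q) measurable), where M > 0. Let P ⊆ 𝒫 be finite with w : P → [0,∞), Σ_{p∈P} w(p) = 1, and let C ⊆ 𝒫 be finite with u : C → [0,∞). Let ε' > 0 and set ε := ε'·M; assume |Σ_{p∈P} w(p) − Σ_{c∈C} u(c)| ≤ ε. Let δ ∈ (0,1), and let q₁,…,q_k be independent Q'-valued random variables with common distribution μ, where k ≥ 2·((1+ε)·M)²·ln(2/δ)/ε². Then with probability at least 1−2δ the following implication holds: if f(P,w,q_i) ≠ 0 for every i and (1/k)·Σ_{i=1}^{k} |1 − f(C,u,q_i)/f(P,w,q_i)| ≤ ε', then |E_μ[f(P,w,q)] − E_μ[f(C,u,q)]| ≤ 3ε = 3ε'·M. -/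

import Mathlib

open MeasureTheory ProbabilityTheory

/-!
For a query `q` with `F q = f(P, w, q) ≠ 0` and `G q = f(C, u, q)`, the additive error
`|F q - G q|` is `F q ≤ M` times the relative error `|1 - G q / F q|`. A small average relative
error on the sample therefore bounds the sample mean of `F - G` by `ε' * M`. The weight constraints
keep `F - G` in `[-(1 + ε) * M, (1 + ε) * M]`, so by the two-sided Hoeffding inequality that sample
mean is within `ε' * M` of `∫ F - ∫ G` outside an event of probability at most `δ`.
-/

section Hoeffding

variable {Ω ι : Type*} [MeasurableSpace Ω] {Pr : Measure Ω}

lemma measureReal_abs_ge_le_of_hasSubgaussianMGF {Y : Ω → ℝ} {c : NNReal}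
    (hY : HasSubgaussianMGF Y c Pr) {t : ℝ} (ht : 0 ≤ t) :
    Pr.real {ω | t ≤ |Y ω|} ≤ 2 * Real.exp (-t ^ 2 / (2 * c)) := by
  have h_split : {ω | t ≤ |Y ω|} = {ω | t ≤ Y ω} ∪ {ω | t ≤ (-Y) ω} :=
    Set.ext fun _ ↦ le_abs (α := ℝ)
  calc Pr.real {ω | t ≤ |Y ω|}
      ≤ Pr.real {ω | t ≤ Y ω} + Pr.real {ω | t ≤ (-Y) ω} :=
        h_split ▸ measureReal_union_le _ _
    _ ≤ Real.exp (-t ^ 2 / (2 * c)) + Real.exp (-t ^ 2 / (2 * c)) :=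
        add_le_add (hY.measure_ge_le ht) (hY.neg.measure_ge_le ht)
    _ = 2 * Real.exp (-t ^ 2 / (2 * c)) := (two_mul _).symm

lemma measureReal_abs_sum_sub_integral_ge_le {Y : ι → Ω → ℝ} (h_indep : iIndepFun Y Pr)
    {s : Finset ι} (h_meas : ∀ i ∈ s, AEMeasurable (Y i) Pr) {a b : ι → ℝ}
    (h_mem : ∀ i ∈ s, ∀ᵐ ω ∂Pr, Y i ω ∈ Set.Icc (a i) (b i)) {t : ℝ} (ht : 0 ≤ t) :
    Pr.real {ω | t ≤ |∑ i ∈ s, (Y i ω - ∫ ω', Y i ω' ∂Pr)|}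
      ≤ 2 * Real.exp (-(2 * t ^ 2 / ∑ i ∈ s, (b i - a i) ^ 2)) := by
  have := h_indep.isProbabilityMeasure
  have h_indep_centered : iIndepFun (fun i ω ↦ Y i ω - ∫ ω', Y i ω' ∂Pr) Pr :=
    h_indep.comp (fun i y ↦ y - ∫ ω', Y i ω' ∂Pr) fun _ ↦ measurable_id.sub_const _
  have h_subG := HasSubgaussianMGF.sum_of_iIndepFun h_indep_centered fun i hi ↦
    hasSubgaussianMGF_of_mem_Icc (h_meas i hi) (h_mem i hi)
  have h_proxy : ((∑ i ∈ s, (‖b i - a i‖₊ / 2) ^ 2 : NNReal) : ℝ)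
      = (∑ i ∈ s, (b i - a i) ^ 2) / 4 := by
    push_cast
    simp only [Real.norm_eq_abs, div_pow, sq_abs, Finset.sum_div]
    norm_num
  refine (measureReal_abs_ge_le_of_hasSubgaussianMGF h_subG ht).trans_eq ?_
  rw [h_proxy]
  congr 2
  ring

lemma two_mul_exp_neg_le_of_sq_mul_log_div_le {n r ε δ : ℝ} (hr : r ≠ 0) (hε : 0 < ε) (hδ : 0 < δ)
    (hn : r ^ 2 * Real.log (2 / δ) / (2 * ε ^ 2) ≤ n) :
    2 * Real.exp (-(2 * (n * ε) ^ 2 / (n * r ^ 2))) ≤ δ := by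
  have h_log : Real.log (2 / δ) ≤ 2 * (n * ε) ^ 2 / (n * r ^ 2) := by
    calc Real.log (2 / δ) ≤ n * (2 * ε ^ 2) / r ^ 2 := by
          rw [le_div_iff₀' (by positivity)]
          exact (div_le_iff₀ (by positivity)).1 hn
      _ = 2 * (n * ε) ^ 2 / (n * r ^ 2) := by
          rcases eq_or_ne n 0 with rfl | hn_ne
          · simp
          · field_simp
  calc 2 * Real.exp (-(2 * (n * ε) ^ 2 / (n * r ^ 2)))
      ≤ 2 * Real.exp (-Real.log (2 / δ)) := by gcongr
    _ = δ := by rw [Real.exp_neg, Real.exp_log (by positivity)]; field_simp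

lemma measureReal_abs_sum_comp_sub_integral_ge_le_of_le_card {β : Type*} [MeasurableSpace β]
    {μ : Measure β} [Fintype ι] {X : ι → Ω → β} (h_indep : iIndepFun X Pr)
    (h_law : ∀ i, HasLaw (X i) μ Pr) {g : β → ℝ} (hg : AEMeasurable g μ) {a b : ℝ} (hab : a < b)
    (hg_mem : ∀ᵐ x ∂μ, g x ∈ Set.Icc a b) {ε δ : ℝ} (hε : 0 < ε) (hδ : 0 < δ)
    (h_card : (b - a) ^ 2 * Real.log (2 / δ) / (2 * ε ^ 2) ≤ Fintype.card ι) :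
    Pr.real {ω | Fintype.card ι * ε ≤ |∑ i, (g (X i ω) - ∫ x, g x ∂μ)|} ≤ δ := by
  have h_integral (i : ι) : ∫ ω, g (X i ω) ∂Pr = ∫ x, g x ∂μ :=
    (h_law i).integral_comp hg.aestronglyMeasurable
  have hg_map (i : ι) : AEMeasurable g (Pr.map (X i)) := (h_law i).map_eq.symm ▸ hg
  have h_mem (i : ι) : ∀ᵐ ω ∂Pr, g (X i ω) ∈ Set.Icc a b :=
    ae_of_ae_map (h_law i).aemeasurable ((h_law i).map_eq.symm ▸ hg_mem)
  have h_tail := measureReal_abs_sum_sub_integral_ge_le (s := Finset.univ)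
    (h_indep.comp₀ (fun _ ↦ g) (fun i ↦ (h_law i).aemeasurable) hg_map)
    (fun i _ ↦ (hg_map i).comp_aemeasurable (h_law i).aemeasurable)
    (fun i _ ↦ h_mem i) (show 0 ≤ Fintype.card ι * ε by positivity)
  simp only [Function.comp_apply, h_integral, Finset.sum_const, Finset.card_univ,
    nsmul_eq_mul] at h_tail
  exact h_tail.trans (two_mul_exp_neg_le_of_sq_mul_log_div_le (sub_ne_zero.2 hab.ne') hε hδ h_card)

end Hoeffding

section AverageRelativeError

variable {ι β : Type*} [Fintype ι]

/-- The average relative error made on the sample `x` when `F` is approximated by `G`. A sample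
point where `F` vanishes contributes `1`, since `G (x i) / 0 = 0`. -/
noncomputable def avgRelError (F G : β → ℝ) (x : ι → β) : ℝ :=
  (1 / (Fintype.card ι : ℝ)) * ∑ i, |1 - G (x i) / F (x i)|

lemma abs_sub_le_mul_abs_one_sub_div {K : Type*} [Field K] [LinearOrder K] [IsStrictOrderedRing K]
    {x y M : K} (hx : x ≠ 0) (hxM : |x| ≤ M) : |x - y| ≤ M * |1 - y / x| := by
  calc |x - y| = |x| * |1 - y / x| := by rw [← abs_mul, mul_one_sub, mul_div_cancel₀ _ hx]
    _ ≤ M * |1 - y / x| := by gcongr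

lemma avg_abs_sub_le_mul_avgRelError {F G : β → ℝ} {x : ι → β} {M : ℝ}
    (hF_ne : ∀ i, F (x i) ≠ 0) (hF_le : ∀ i, |F (x i)| ≤ M) :
    (1 / (Fintype.card ι : ℝ)) * ∑ i, |F (x i) - G (x i)| ≤ M * avgRelError F G x := by
  rw [avgRelError, mul_left_comm, Finset.mul_sum _ _ M]
  gcongr with i
  exact abs_sub_le_mul_abs_one_sub_div (hF_ne i) (hF_le i)

lemma abs_le_add_of_avg_abs_le {y : ι → ℝ} {c η ε : ℝ}
    (h_dev : |∑ i, (y i - c)| < Fintype.card ι * ε)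
    (h_avg : (1 / (Fintype.card ι : ℝ)) * ∑ i, |y i| ≤ η) : |c| ≤ η + ε := by
  have h_card : (0 : ℝ) < Fintype.card ι := by
    refine lt_of_le_of_ne (Nat.cast_nonneg _) fun h_zero ↦ ?_
    rw [← h_zero, zero_mul] at h_dev
    exact (abs_nonneg _).not_gt h_dev
  rw [one_div, inv_mul_le_iff₀ h_card] at h_avg
  have h_sum : Fintype.card ι * c = ∑ i, y i - ∑ i, (y i - c) := by
    simp [Finset.sum_sub_distrib]
  refine le_of_mul_le_mul_left ?_ h_card
  calc Fintype.card ι * |c| = |∑ i, y i - ∑ i, (y i - c)| := by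
        rw [← h_sum, abs_mul, Nat.abs_cast]
    _ ≤ |∑ i, y i| + |∑ i, (y i - c)| := abs_sub _ _
    _ ≤ ∑ i, |y i| + |∑ i, (y i - c)| := by gcongr; exact Finset.abs_sum_le_sum_abs _ _
    _ ≤ Fintype.card ι * (η + ε) := by linarith

end AverageRelativeError

section TotalCost

variable {α β : Type*}

/-- The total cost `f(S, v, q) = ∑ s ∈ S, v s * f s q` of the query `q` on the finite set `S`
with weights `v`. -/
def totalCost (f : α → β → ℝ) (S : Finset α) (v : α → ℝ) (q : β) : ℝ :=
  ∑ s ∈ S, v s * f s q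

lemma totalCost_mem_Icc {f : α → β → ℝ} {S : Finset α} {v : α → ℝ} {q : β} {M V : ℝ}
    (hM : 0 ≤ M) (hf : ∀ s ∈ S, f s q ∈ Set.Icc 0 M) (hv : ∀ s ∈ S, 0 ≤ v s)
    (hV : ∑ s ∈ S, v s ≤ V) : totalCost f S v q ∈ Set.Icc 0 (V * M) := by
  refine ⟨Finset.sum_nonneg fun s hs ↦ mul_nonneg (hv s hs) (hf s hs).1, ?_⟩
  calc ∑ s ∈ S, v s * f s q
      ≤ ∑ s ∈ S, v s * M :=
        Finset.sum_le_sum fun s hs ↦ mul_le_mul_of_nonneg_left (hf s hs).2 (hv s hs)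
    _ = (∑ s ∈ S, v s) * M := (Finset.sum_mul ..).symm
    _ ≤ V * M := by gcongr

lemma integrable_totalCost [MeasurableSpace β] {μ : Measure β} {f : α → β → ℝ}
    {S : Finset α} (hf : ∀ s ∈ S, Integrable (f s) μ) (v : α → ℝ) :
    Integrable (totalCost f S v) μ :=
  integrable_finsetSum S fun s hs ↦ (hf s hs).const_mul (v s)

end TotalCost

section Generalization

variable {Ω ι β : Type*} [MeasurableSpace Ω] {Pr : Measure Ω} [MeasurableSpace β] {μ : Measure β}

lemma ofReal_one_sub_le_measure_of_compl_subset [IsProbabilityMeasure Pr] {bad good : Set Ω}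
    {δ : ℝ} (h_subset : badᶜ ⊆ good) (h_bad : Pr.real bad ≤ δ) :
    ENNReal.ofReal (1 - δ) ≤ Pr good := by
  have h_union : bad ∪ good = Set.univ := Set.compl_subset_iff_union.1 h_subset
  have h_one : 1 ≤ Pr.real bad + Pr.real good := by
    simpa only [h_union, probReal_univ] using measureReal_union_le (μ := Pr) bad good
  rw [← ofReal_measureReal]
  exact ENNReal.ofReal_le_ofReal (by linarith)

lemma ofReal_one_sub_le_measure_avgRelError_le_imp [Fintype ι] {X : ι → Ω → β}
    (h_indep : iIndepFun X Pr) (h_law : ∀ i, HasLaw (X i) μ Pr) {F G : β → ℝ}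
    (hF_int : Integrable F μ) (hG_int : Integrable G μ) {M B : ℝ} (hM : 0 ≤ M) (hB : 0 < B)
    (hF_le : ∀ q, |F q| ≤ M) (hFG_le : ∀ᵐ q ∂μ, |F q - G q| ≤ B)
    {η ε δ : ℝ} (hε : 0 < ε) (hδ : 0 < δ)
    (h_card : 2 * B ^ 2 * Real.log (2 / δ) / ε ^ 2 ≤ Fintype.card ι) :
    ENNReal.ofReal (1 - δ) ≤
      Pr {ω | (∀ i, F (X i ω) ≠ 0) ∧ avgRelError F G (X · ω) ≤ η →
        |∫ q, F q ∂μ - ∫ q, G q ∂μ| ≤ M * η + ε} := by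
  have := h_indep.isProbabilityMeasure
  have h_bad := measureReal_abs_sum_comp_sub_integral_ge_le_of_le_card
    (g := fun q ↦ F q - G q) h_indep h_law
    (hF_int.sub hG_int).aemeasurable (neg_lt_self hB) (hFG_le.mono fun _ ↦ abs_le.1) hε hδ
    (le_of_eq_of_le (by ring) h_card)
  refine ofReal_one_sub_le_measure_of_compl_subset (fun ω h_good ⟨hF_ne, h_rel⟩ ↦ ?_) h_bad
  rw [← integral_sub hF_int hG_int]
  refine abs_le_add_of_avg_abs_le (not_le.1 h_good) ?_
  exact (avg_abs_sub_le_mul_avgRelError hF_ne fun i ↦ hF_le (X i ω)).trans (by gcongr)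

theorem practical_autoCL_generalization_general [IsProbabilityMeasure μ] [Fintype ι]
    {X : ι → Ω → β} (h_indep : iIndepFun X Pr) (h_law : ∀ i, HasLaw (X i) μ Pr)
    {α : Type*} {f : α → β → ℝ} {M : ℝ} (hM : 0 < M) (hf_mem : ∀ p q, f p q ∈ Set.Icc 0 M)
    (hf_meas : ∀ p, AEMeasurable (f p) μ)
    {P : Finset α} {w : α → ℝ} (hw : ∀ p ∈ P, 0 ≤ w p) (hw_sum : ∑ p ∈ P, w p ≤ 1)
    {ε' : ℝ} (hε' : 0 < ε')
    {C : Finset α} {u : α → ℝ} (hu : ∀ c ∈ C, 0 ≤ u c) (hu_sum : ∑ c ∈ C, u c ≤ 1 + ε' * M)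
    {δ : ℝ} (hδ : 0 < δ)
    (h_card : 2 * ((1 + ε' * M) * M) ^ 2 * Real.log (2 / δ) / (ε' * M) ^ 2 ≤ Fintype.card ι) :
    ENNReal.ofReal (1 - δ) ≤
      Pr {ω | (∀ i, totalCost f P w (X i ω) ≠ 0) ∧
          avgRelError (totalCost f P w) (totalCost f C u) (X · ω) ≤ ε' →
        |∫ q, totalCost f P w q ∂μ - ∫ q, totalCost f C u q ∂μ| ≤ 2 * ε' * M} := by
  have hf_int (p : α) : Integrable (f p) μ :=
    .of_mem_Icc 0 M (hf_meas p) (ae_of_all _ (hf_mem p))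
  have hF_mem (q : β) : totalCost f P w q ∈ Set.Icc 0 M := by
    simpa only [one_mul] using totalCost_mem_Icc hM.le (fun p _ ↦ hf_mem p q) hw hw_sum
  have hG_mem (q : β) : totalCost f C u q ∈ Set.Icc 0 ((1 + ε' * M) * M) :=
    totalCost_mem_Icc hM.le (fun c _ ↦ hf_mem c q) hu hu_sum
  have hF_le (q : β) : |totalCost f P w q| ≤ M := by
    simpa only [abs_of_nonneg (hF_mem q).1] using (hF_mem q).2
  have hM_le : M ≤ (1 + ε' * M) * M :=
    le_mul_of_one_le_left hM.le (le_add_of_nonneg_right (by positivity))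
  have hFG_le (q : β) : |totalCost f P w q - totalCost f C u q| ≤ (1 + ε' * M) * M :=
    abs_sub_le_of_nonneg_of_le (hF_mem q).1 ((hF_mem q).2.trans hM_le) (hG_mem q).1 (hG_mem q).2
  have h_bound : M * ε' + ε' * M = 2 * ε' * M := by ring
  exact h_bound ▸ ofReal_one_sub_le_measure_avgRelError_le_imp h_indep h_law
    (integrable_totalCost (fun p _ ↦ hf_int p) w) (integrable_totalCost (fun c _ ↦ hf_int c) u)
    hM.le (by positivity) hF_le (ae_of_all _ hFG_le) (by positivity) hδ h_card

end Generalization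

/-- **Generalization for the practical algorithm (Eq. (5) combined with Claim 2).**
If `0 ≤ f ≤ M` on the ground set, the input weights sum to `1`, `ε := ε'·M`, the coreset
weight sum is within `ε` of the input weight sum, and `k ≥ 2((1+ε)M)²ln(2/δ)/ε²` queries
are sampled i.i.d. from `μ`, then with probability at least `1 - 2δ`: whenever the
empirical losses of `(P,w)` are nonzero on the sample and the average relative
approximation error of `(C,u)` over the sample is at most `ε'`, the expected losses of
`(P,w)` and `(C,u)` differ by at most `3ε = 3ε'·M`. -/
theorem practical_autoCL_generalization
    {Q' : Type*} [MeasurableSpace Q'] (μ : Measure Q') [IsProbabilityMeasure μ]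
    {α : Type*} (f : α → Q' → ℝ) (M : ℝ) (hM : 0 < M)
    (hf_nonneg : ∀ (p : α) (q : Q'), 0 ≤ f p q)
    (hf_bound : ∀ (p : α) (q : Q'), f p q ≤ M)
    (hf_meas : ∀ p : α, Measurable (f p))
    (P : Finset α) (w : α → ℝ) (hw : ∀ p ∈ P, 0 ≤ w p)
    (hwsum : ∑ p ∈ P, w p = 1)
    (C : Finset α) (u : α → ℝ) (hu : ∀ c ∈ C, 0 ≤ u c)
    (ε' ε : ℝ) (hε' : 0 < ε') (hε : ε = ε' * M)
    (husum : |∑ p ∈ P, w p - ∑ c ∈ C, u c| ≤ ε)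
    (δ : ℝ) (hδ : δ ∈ Set.Ioo (0 : ℝ) 1)
    {Ω : Type*} [MeasurableSpace Ω] (Pr : Measure Ω) [IsProbabilityMeasure Pr]
    (k : ℕ) (hk : (k : ℝ) ≥ 2 * ((1 + ε) * M) ^ 2 * Real.log (2 / δ) / ε ^ 2)
    (X : Fin k → Ω → Q')
    (hX_meas : ∀ i, Measurable (X i))
    (hX_indep : iIndepFun X Pr)
    (hX_dist : ∀ i, Measure.map (X i) Pr = μ) :
    Pr {ω : Ω |
        ((∀ i : Fin k, (∑ p ∈ P, w p * f p (X i ω)) ≠ 0) ∧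
          (1 / (k : ℝ)) * ∑ i : Fin k,
            |1 - (∑ c ∈ C, u c * f c (X i ω)) / (∑ p ∈ P, w p * f p (X i ω))| ≤ ε') →
          |(∫ q, (∑ p ∈ P, w p * f p q) ∂μ) - ∫ q, (∑ c ∈ C, u c * f c q) ∂μ|
            ≤ 3 * ε' * M}
      ≥ ENNReal.ofReal (1 - 2 * δ) := by
  subst hε
  obtain ⟨hδ_pos, -⟩ := hδ
  have hu_sum : ∑ c ∈ C, u c ≤ 1 + ε' * M := by linarith [(abs_le.1 husum).1]
  have h_general := practical_autoCL_generalization_general hX_indep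
    (fun i ↦ ⟨(hX_meas i).aemeasurable, hX_dist i⟩) hM
    (fun p q ↦ ⟨hf_nonneg p q, hf_bound p q⟩) (fun p ↦ (hf_meas p).aemeasurable)
    hw hwsum.le hε' hu hu_sum hδ_pos (by simpa only [Fintype.card_fin] using hk)
  simp only [avgRelError, totalCost, Fintype.card_fin] at h_general
  have h_bound : 2 * ε' * M ≤ 3 * ε' * M := by gcongr; norm_num
  exact (ENNReal.ofReal_le_ofReal (by linarith)).trans
    (h_general.trans (measure_mono fun ω h h_sample ↦ (h h_sample).trans h_bound))
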